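/- Let A_Γ be a CLTTF Artin group. There exist a constant A > 0 and a function k: (0,∞) → (0,∞) such that for every stable coset C ⊆ A_Γ there are three subsets Q1, Q2, Q3 ⊆ A_Γ, each of which is the image of an (A,A)-quasi-isometric embedding of the Euclidean plane ℝ² into (A_Γ, d), such that for every r ≥ A the Hausdorff distance between C and N_r(Q1) ∩ N_r(Q2) ∩ N_r(Q3) is less than k(r), where N_r denotes the closed r-neighborhood with respect to the word metric. (This is the CLTTF case of the statement that every stable line is a coarse intersection of three 2-dimensional quasiflats.) -/

import Mathlib

/-- The alternating product `x y x y ⋯` with `n` factors. -/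
def altProd {G : Type*} [Monoid G] : ℕ → G → G → G
  | 0, _, _ => 1
  | n + 1, x, y => x * altProd n y x

/-- A simple graph with each edge labeled by an integer `≥ 2`. -/
structure LabeledGraph (V : Type*) where
  graph : SimpleGraph V
  label : V → V → ℕ
  label_symm : ∀ a b, label a b = label b a
  two_le_label : ∀ ⦃a b⦄, graph.Adj a b → 2 ≤ label a b

namespace LabeledGraph

variable {V : Type*} (Γ : LabeledGraph V)

/-- The Artin relations `prod(a,b;m) = prod(b,a;m)` associated to a labeled graph,
as elements of the free group on the vertices. -/
def artinRels : Set (FreeGroup V) :=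
  { r | ∃ a b, Γ.graph.Adj a b ∧
      r = altProd (Γ.label a b) (FreeGroup.of a) (FreeGroup.of b) *
          (altProd (Γ.label a b) (FreeGroup.of b) (FreeGroup.of a))⁻¹ }

end LabeledGraph

/-- The Artin group with defining labeled graph `Γ`. -/
abbrev ArtinGroup {V : Type*} (Γ : LabeledGraph V) :=
  PresentedGroup Γ.artinRels

/-- The standard generator of the Artin group corresponding to a vertex. -/
def artinGen {V : Type*} (Γ : LabeledGraph V) (v : V) : ArtinGroup Γ :=
  PresentedGroup.of v

/-- Word length of a group element with respect to a set `S` of generators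
(words may use generators and their inverses). -/
noncomputable def wordLength {G : Type*} [Group G] (S : Set G) (g : G) : ℕ :=
  sInf { n | ∃ l : List G, l.length = n ∧ (∀ x ∈ l, x ∈ S ∨ x⁻¹ ∈ S) ∧ l.prod = g }

/-- Word metric with respect to a generating set `S`. -/
noncomputable def wordDist {G : Type*} [Group G] (S : Set G) (g h : G) : ℝ :=
  (wordLength S (g⁻¹ * h) : ℝ)

/-- The word metric on an Artin group with respect to the standard generators. -/
noncomputable def artinDist {V : Type*} (Γ : LabeledGraph V) :
    ArtinGroup Γ → ArtinGroup Γ → ℝ :=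
  wordDist (Set.range (artinGen Γ))

/-- `(L,A)`-quasi-isometric embedding between spaces with distance functions. -/
def IsQIEmbedding {X Y : Type*} (L A : ℝ) (dX : X → X → ℝ) (dY : Y → Y → ℝ)
    (q : X → Y) : Prop :=
  ∀ x x', dX x x' / L - A ≤ dY (q x) (q x') ∧ dY (q x) (q x') ≤ L * dX x x' + A

/-- `(L,A)`-quasi-isometry: an `(L,A)`-quasi-isometric embedding with `A`-dense image. -/
def IsQuasiIsometry {X Y : Type*} (L A : ℝ) (dX : X → X → ℝ) (dY : Y → Y → ℝ)
    (q : X → Y) : Prop :=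
  IsQIEmbedding L A dX dY q ∧ ∀ y : Y, ∃ x : X, dY (q x) y ≤ A

/-- CLTTF: connected with at least three vertices, large type, triangle free. -/
def LabeledGraph.CLTTF {V : Type*} (Γ : LabeledGraph V) : Prop :=
  Γ.graph.Connected ∧ 3 ≤ Nat.card V ∧
    (∀ ⦃a b⦄, Γ.graph.Adj a b → 3 ≤ Γ.label a b) ∧ Γ.graph.CliqueFree 3

/-- A decomposition of `Γ` as a union of two full subgraphs (given by vertex sets
`S₁`, `S₂`, each different from `T`) intersecting along `T`. -/
def LabeledGraph.IsSepDecomp {V : Type*} (Γ : LabeledGraph V) (S₁ S₂ T : Set V) : Prop :=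
  S₁ ∪ S₂ = Set.univ ∧ S₁ ∩ S₂ = T ∧ S₁ ≠ T ∧ S₂ ≠ T ∧
    ∀ ⦃a b⦄, Γ.graph.Adj a b → (a ∈ S₁ ∧ b ∈ S₁) ∨ (a ∈ S₂ ∧ b ∈ S₂)

/-- `Γ` has a separating vertex or a separating edge. -/
def LabeledGraph.HasSeparatingVertexOrEdge {V : Type*} (Γ : LabeledGraph V) : Prop :=
  (∃ v : V, ∃ S₁ S₂ : Set V, Γ.IsSepDecomp S₁ S₂ {v}) ∨
    ∃ a b : V, Γ.graph.Adj a b ∧ ∃ S₁ S₂ : Set V, Γ.IsSepDecomp S₁ S₂ {a, b}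

/-- An isomorphism of labeled graphs: a graph isomorphism preserving edge labels. -/
structure LabeledGraphIso {V V' : Type*} (Γ : LabeledGraph V) (Γ' : LabeledGraph V') where
  toEquiv : V ≃ V'
  adj_iff : ∀ a b, Γ'.graph.Adj (toEquiv a) (toEquiv b) ↔ Γ.graph.Adj a b
  label_eq : ∀ ⦃a b⦄, Γ.graph.Adj a b → Γ'.label (toEquiv a) (toEquiv b) = Γ.label a b

/-- `f` is an isometry for the distance function `d`. -/
def IsIsometryOf {X : Type*} (d : X → X → ℝ) (f : X → X) : Prop :=
  ∀ x y, d (f x) (f y) = d x y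

/-- The left coset `g•H` as a set. -/
def leftCosetSet {G : Type*} [Group G] (g : G) (H : Subgroup G) : Set G :=
  (fun x => g * x) '' (H : Set G)

/-- The standard subgroup generated by the two endpoints of an edge. -/
def edgeSubgroup {V : Type*} (Γ : LabeledGraph V) (a b : V) : Subgroup (ArtinGroup Γ) :=
  Subgroup.closure {artinGen Γ a, artinGen Γ b}

/-- The standard subgroup generated by a set of vertices. -/
def standardSubgroup {V : Type*} (Γ : LabeledGraph V) (S : Set V) :
    Subgroup (ArtinGroup Γ) :=
  Subgroup.closure (artinGen Γ '' S)

/-- The element `Δ_e = prod(a,b;m)` associated to an edge `e = {a,b}` of label `m`. -/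
def artinDelta {V : Type*} (Γ : LabeledGraph V) (a b : V) : ArtinGroup Γ :=
  altProd (Γ.label a b) (artinGen Γ a) (artinGen Γ b)

/-- A leaf of a graph: a vertex with a unique neighbour. -/
def LabeledGraph.IsLeaf {V : Type*} (Γ : LabeledGraph V) (a : V) : Prop :=
  ∃! b, Γ.graph.Adj a b

/-- A stable vertex: not a leaf, or a leaf whose unique incident edge has odd label
and whose other endpoint is not a leaf. -/
def LabeledGraph.StableVertex {V : Type*} (Γ : LabeledGraph V) (a : V) : Prop :=
  ¬ Γ.IsLeaf a ∨
    (Γ.IsLeaf a ∧ ∃ b, Γ.graph.Adj a b ∧ Odd (Γ.label a b) ∧ ¬ Γ.IsLeaf b)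

/-- Stable cosets: left cosets of cyclic subgroups `⟨Δ_e⟩` for an edge `e`, or `⟨a⟩`
for a stable vertex `a`. -/
def StableCoset {V : Type*} (Γ : LabeledGraph V) (C : Set (ArtinGroup Γ)) : Prop :=
  (∃ (g : ArtinGroup Γ) (a b : V), Γ.graph.Adj a b ∧
      C = leftCosetSet g (Subgroup.zpowers (artinDelta Γ a b))) ∨
    ∃ (g : ArtinGroup Γ) (a : V), Γ.StableVertex a ∧
      C = leftCosetSet g (Subgroup.zpowers (artinGen Γ a))

/-- The Hausdorff distance between `A` and `B` (w.r.t. the distance function `d`)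
is less than `D`. -/
def HausdorffClose {X : Type*} (d : X → X → ℝ) (D : ℝ) (A B : Set X) : Prop :=
  (∀ a ∈ A, ∃ b ∈ B, d a b < D) ∧ ∀ b ∈ B, ∃ a ∈ A, d a b < D

/-- Two subsets are parallel if they are at finite Hausdorff distance. -/
def CoarseParallel {X : Type*} (d : X → X → ℝ) (A B : Set X) : Prop :=
  ∃ D : ℝ, HausdorffClose d D A B

/-- A `2`-dimensional Artin group: every triangle with labels `p, q, r` satisfies
`1/p + 1/q + 1/r ≤ 1`. -/
def LabeledGraph.TwoDimensional {V : Type*} (Γ : LabeledGraph V) : Prop :=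
  ∀ a b c : V, Γ.graph.Adj a b → Γ.graph.Adj b c → Γ.graph.Adj a c →
    (1 / (Γ.label a b : ℚ)) + 1 / (Γ.label b c : ℚ) + 1 / (Γ.label a c : ℚ) ≤ 1

/-- The closed `r`-neighbourhood of a set w.r.t. a distance function. -/
def coarseNbhd {X : Type*} (d : X → X → ℝ) (r : ℝ) (S : Set X) : Set X :=
  { x | ∃ y ∈ S, d y x ≤ r }

/-!
Let `W` be the group generated by the reflections of the Tits representation of `Γ`. Sending each
generator of the Artin group to the single crossing of its wall defines a homomorphism to
`ℤ^W ⋊ W`, because both sides of an Artin relation cross the same walls. The number of crossings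
of any wall is bounded by the word length, so these numbers show that `⟨a, Δ²⟩ ≅ ℤ²` is undistorted
for every edge `{a, b}`, hence is a quasiflat. They also tell elements of these subgroups apart,
which gives `⟨a, Δ²⟩ ∩ ⟨b, Δ²⟩ = ⟨Δ²⟩` for an edge `{a, b}` of label at least `3`, and
`⟨a, Δ_{ab}²⟩ ∩ ⟨a, Δ_{ac}²⟩ = ⟨a⟩` for distinct neighbours `b` and `c` of `a`.

In a finitely generated group the intersection of the `r`-neighbourhoods of two subgroups is at
finite Hausdorff distance from the intersection of the subgroups, so `⟨Δ²⟩`, and with it `⟨Δ⟩`, is a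
coarse intersection of quasiflats, and so is `⟨a⟩` when `a` is not a leaf. If `a` is a leaf attached
by an edge of odd label to `b`, then `Δ` conjugates `b` to `a`, so `⟨a⟩` is at bounded distance from
a translate of `⟨b⟩`. The constants are uniform because, up to translation, there are only finitely
many stable cosets.
-/

section AltProd

variable {M N : Type*} [Monoid M] [Monoid N] {m : ℕ} {x y : M}

theorem altProd_succ (n : ℕ) (x y : M) : altProd (n + 1) x y = x * altProd n y x := rfl

theorem map_altProd (f : M →* N) (n : ℕ) (x y : M) :
    f (altProd n x y) = altProd n (f x) (f y) := by
  induction n generalizing x y with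
  | zero => simp [altProd]
  | succ n ih => simp [altProd_succ, ih]

theorem altProd_two_mul (n : ℕ) (x y : M) : altProd (2 * n) x y = (x * y) ^ n := by
  induction n with
  | zero => simp [altProd]
  | succ n ih => rw [mul_add, mul_one, altProd_succ, altProd_succ, ih, pow_succ', mul_assoc]

theorem altProd_add_of_even (hm : Even m) (n : ℕ) (x y : M) :
    altProd (m + n) x y = altProd m x y * altProd n x y := by
  obtain ⟨k, rfl⟩ := hm.exists_two_nsmul
  rw [smul_eq_mul]
  induction k with
  | zero => simp [altProd]
  | succ k ih =>
    rw [mul_add, mul_one, show 2 * k + 2 + n = 2 * k + n + 1 + 1 by ring]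
    simp only [altProd_succ, ih (even_two_mul k), mul_assoc]

theorem altProd_add_of_odd (hm : Odd m) (n : ℕ) (x y : M) :
    altProd (m + n) x y = altProd m x y * altProd n y x := by
  obtain ⟨k, rfl⟩ := hm
  rw [add_right_comm, altProd_succ, altProd_succ, altProd_add_of_even (even_two_mul k), mul_assoc]

theorem altProd_mul_altProd_of_comm (h : altProd m x y = altProd m y x) :
    altProd m x y * altProd m x y = (x * y) ^ m := by
  rw [← altProd_two_mul, two_mul]
  rcases Nat.even_or_odd m with hm | hm
  · rw [altProd_add_of_even hm]
  · rw [altProd_add_of_odd hm, ← h]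

theorem commute_mul_pow_of_altProd_comm (h : altProd m x y = altProd m y x) :
    Commute x ((x * y) ^ m) := by
  have hswap : (y * x) ^ m = (x * y) ^ m := by
    rw [← altProd_mul_altProd_of_comm h, ← altProd_mul_altProd_of_comm h.symm, h]
  calc x * (x * y) ^ m = x * (y * x) ^ m := by rw [hswap]
    _ = (x * y) ^ m * x := (mul_pow_mul x y m).symm

theorem semiconjBy_altProd_of_odd (hm : Odd m) (h : altProd m x y = altProd m y x) :
    SemiconjBy (altProd m x y) y x := by
  calc altProd m x y * y = altProd (m + 1) x y := by
        rw [altProd_add_of_odd hm 1, altProd_succ 0, altProd, mul_one]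
    _ = x * altProd m x y := by rw [altProd_succ, h]

variable {W : Type*} [Group W] {a b : W}

theorem altProd_eq_altProd_swap_of_add_eq (ha : a * a = 1) (hb : b * b = 1)
    (h : (a * b) ^ m = 1) {p q : ℕ} (hpq : p + q = 2 * m) : altProd p a b = altProd q b a := by
  have h' : (b * a) ^ m = 1 := by
    have := mul_pow_mul b a m
    rwa [h, mul_one, mul_eq_right] at this
  induction p generalizing a b q with
  | zero => rw [← zero_add q, hpq, altProd_two_mul, h', altProd]
  | succ p ih => rw [altProd_succ, ih hb ha h' (q := q + 1) (by omega) h, altProd_succ, ← mul_assoc,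
      ha, one_mul]

theorem altProd_two_mul_succ_add_one_eq_conj (n : ℕ) (x y : M) :
    altProd (2 * (n + 1) + 1) x y = x * altProd (2 * n + 1) y x * x := by
  rw [altProd_succ, mul_add, mul_one, altProd_add_of_odd (odd_two_mul_add_one n) 1, altProd_succ 0,
    altProd, mul_one, mul_assoc]

end AltProd

section WordMetric

variable {G : Type*} [Group G] {S : Set G}

theorem wordLength_prod_le {l : List G} (hl : ∀ x ∈ l, x ∈ S ∨ x⁻¹ ∈ S) :
    wordLength S l.prod ≤ l.length :=
  Nat.sInf_le ⟨l, rfl, hl, rfl⟩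

theorem wordLength_one : wordLength S (1 : G) = 0 :=
  Nat.le_zero.1 (wordLength_prod_le (l := []) (by simp))

theorem exists_list_length_eq_wordLength (hS : Subgroup.closure S = ⊤) (g : G) :
    ∃ l : List G, l.length = wordLength S g ∧ (∀ x ∈ l, x ∈ S ∨ x⁻¹ ∈ S) ∧ l.prod = g := by
  have hg : g ∈ Subgroup.closure S := hS ▸ Subgroup.mem_top g
  rw [← Subgroup.mem_toSubmonoid, Subgroup.closure_toSubmonoid] at hg
  obtain ⟨l, hl, hprod⟩ := Submonoid.exists_list_of_mem_closure hg
  exact Nat.sInf_mem (s := { n | ∃ l : List G, l.length = n ∧ (∀ x ∈ l, x ∈ S ∨ x⁻¹ ∈ S) ∧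
    l.prod = g }) ⟨_, l, rfl, hl, hprod⟩

theorem wordLength_mul_le (hS : Subgroup.closure S = ⊤) (g h : G) :
    wordLength S (g * h) ≤ wordLength S g + wordLength S h := by
  obtain ⟨l, hl, hlS, rfl⟩ := exists_list_length_eq_wordLength hS g
  obtain ⟨l', hl', hlS', rfl⟩ := exists_list_length_eq_wordLength hS h
  rw [← hl, ← hl', ← List.length_append, ← List.prod_append]
  refine wordLength_prod_le fun x hx => ?_
  rcases List.mem_append.1 hx with hx | hx
  exacts [hlS x hx, hlS' x hx]

theorem wordLength_inv_le (hS : Subgroup.closure S = ⊤) (g : G) :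
    wordLength S g⁻¹ ≤ wordLength S g := by
  obtain ⟨l, hl, hlS, rfl⟩ := exists_list_length_eq_wordLength hS g
  rw [← hl, List.prod_inv_reverse]
  refine (wordLength_prod_le fun x hx => ?_).trans_eq (by simp)
  rw [List.mem_reverse, List.mem_map] at hx
  obtain ⟨y, hy, rfl⟩ := hx
  rw [inv_inv]
  exact (hlS y hy).symm

theorem wordLength_inv (hS : Subgroup.closure S = ⊤) (g : G) :
    wordLength S g⁻¹ = wordLength S g :=
  le_antisymm (wordLength_inv_le hS g) (by simpa using wordLength_inv_le hS g⁻¹)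

theorem wordLength_zpow_le (hS : Subgroup.closure S = ⊤) (g : G) (n : ℤ) :
    wordLength S (g ^ n) ≤ n.natAbs * wordLength S g := by
  have h (k : ℕ) : wordLength S (g ^ k) ≤ k * wordLength S g := by
    induction k with
    | zero => simp [wordLength_one]
    | succ k ih =>
      rw [pow_succ, add_mul, one_mul]
      exact (wordLength_mul_le hS _ _).trans (by gcongr)
  obtain ⟨k, rfl | rfl⟩ := n.eq_nat_or_neg
  · simpa using h k
  · simpa [wordLength_inv hS] using h k

theorem finite_wordLength_le (hS : Subgroup.closure S = ⊤) (hfin : S.Finite) (n : ℕ) :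
    {g : G | wordLength S g ≤ n}.Finite := by
  have hT : (S ∪ S⁻¹).Finite := hfin.union hfin.inv
  have := hT.to_subtype
  refine ((List.finite_length_le (↥(S ∪ S⁻¹)) n).image
    fun l => (l.map Subtype.val).prod).subset fun g hg => ?_
  obtain ⟨l, hl, hlS, rfl⟩ := exists_list_length_eq_wordLength hS g
  lift l to List (↥(S ∪ S⁻¹)) using hlS
  exact ⟨l, by rw [Set.mem_ofPred_eq, ← hl, List.length_map] at hg; exact hg, rfl⟩

theorem wordDist_mul_left (g x y : G) : wordDist S (g * x) (g * y) = wordDist S x y := by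
  simp [wordDist, mul_assoc]

theorem wordDist_self (x : G) : wordDist S x x = 0 := by
  simp [wordDist, wordLength_one]

theorem wordDist_triangle (hS : Subgroup.closure S = ⊤) (x y z : G) :
    wordDist S x z ≤ wordDist S x y + wordDist S y z := by
  have := wordLength_mul_le hS (x⁻¹ * y) (y⁻¹ * z)
  rw [mul_assoc, mul_inv_cancel_left] at this
  unfold wordDist
  exact_mod_cast this

end WordMetric

section CrossingCounts

variable {W : Type*} [Group W]

/-- The wreath-like product `ℤ^W ⋊ W`, with `W` acting on functions `W → ℤ` by conjugating the
argument. An element records a group element together with a signed number of crossings of each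
wall, walls being labelled by the reflections in `W`. -/
abbrev CountGroup (W : Type*) [Group W] :=
  (W → Multiplicative ℤ) ⋊[(mulAutArrow (G := ConjAct W)).comp
    (ConjAct.toConjAct : W ≃* ConjAct W).toMonoidHom] W

namespace CountGroup

/-- The signed number of crossings of the wall labelled by `t`. -/
def count (x : CountGroup W) (t : W) : ℤ := (x.left t).toAdd

theorem count_one (t : W) : (1 : CountGroup W).count t = 0 := rfl

theorem count_mul (x y : CountGroup W) (t : W) :
    (x * y).count t = x.count t + y.count (x.right⁻¹ * t * x.right) := by
  change x.count t + y.count ((ConjAct.toConjAct x.right)⁻¹ • t) = _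
  rw [← map_inv, ConjAct.toConjAct_smul, inv_inv]

theorem count_inv (x : CountGroup W) (t : W) :
    x⁻¹.count t = -x.count (x.right * t * x.right⁻¹) := by
  have h := count_mul x x⁻¹ (x.right * t * x.right⁻¹)
  rw [mul_inv_cancel, count_one] at h
  simp only [mul_assoc, inv_mul_cancel, inv_mul_cancel_left, mul_one] at h ⊢
  linarith

theorem ext_count {x y : CountGroup W} (h : ∀ t, x.count t = y.count t)
    (h' : x.right = y.right) : x = y :=
  SemidirectProduct.ext (funext h) h'

theorem count_zpow {u : CountGroup W} (hu : ∀ t, u.count (u.right⁻¹ * t * u.right) = u.count t)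
    (n : ℤ) (t : W) : (u ^ n).count t = n * u.count t := by
  have hu' (t : W) : u.count (u.right * t * u.right⁻¹) = u.count t := by
    rw [← hu]; simp [mul_assoc]
  induction n generalizing t with
  | zero => simp [count_one]
  | succ n ih =>
    rw [add_comm, zpow_one_add, count_mul, ih, hu]; ring
  | pred n ih =>
    rw [sub_eq_neg_add, zpow_add, zpow_neg_one, count_mul, ih, count_inv, hu',
      SemidirectProduct.inv_right, inv_inv, hu']
    ring

theorem abs_count_le_wordLength {G : Type*} [Group G] {S : Set G} (hS : Subgroup.closure S = ⊤)
    (φ : G →* CountGroup W) (hφ : ∀ s ∈ S, ∀ t, |(φ s).count t| ≤ 1) (g : G) (t : W) :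
    |(φ g).count t| ≤ wordLength S g := by
  obtain ⟨l, hl, hlS, rfl⟩ := exists_list_length_eq_wordLength hS g
  rw [← hl]
  clear hl
  induction l generalizing t with
  | nil => simp [count_one]
  | cons x l ih =>
    have hx : |(φ x).count t| ≤ 1 := by
      rcases hlS x List.mem_cons_self with hx | hx
      · exact hφ x hx t
      · rw [← inv_inv x, map_inv, count_inv, abs_neg]
        exact hφ _ hx _
    have ih' := ih ((φ x).right⁻¹ * t * (φ x).right) fun y hy => hlS y (List.mem_cons_of_mem _ hy)
    rw [List.prod_cons, map_mul, count_mul, List.length_cons]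
    push_cast
    exact (abs_add_le _ _).trans ((add_le_add hx ih').trans_eq (add_comm _ _))

open Classical in
/-- The element of `CountGroup W` lying over the reflection `s` and crossing its wall once. -/
noncomputable def single (s : W) : CountGroup W := ⟨Pi.mulSingle s (Multiplicative.ofAdd 1), s⟩

theorem right_single (s : W) : (single s).right = s := rfl

open Classical in
theorem count_single (s t : W) : (single s).count t = if t = s then 1 else 0 := by
  change Multiplicative.toAdd (Pi.mulSingle (M := fun _ => Multiplicative ℤ) s _ t) = _
  rw [Pi.mulSingle_apply, apply_ite Multiplicative.toAdd, toAdd_ofAdd, toAdd_one]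

open Classical in
theorem count_single_zpow (s : W) (n : ℤ) (t : W) :
    (single s ^ n).count t = if t = s then n else 0 := by
  have hconj (t : W) : s⁻¹ * t * s = s ↔ t = s := by
    rw [mul_assoc, inv_mul_eq_iff_eq_mul, mul_left_inj]
  rw [count_zpow (fun t => by simp only [count_single, right_single, hconj]), count_single,
    mul_ite, mul_one, mul_zero]

theorem right_altProd_single (n : ℕ) (a b : W) :
    (altProd n (single a) (single b)).right = altProd n a b :=
  map_altProd (SemidirectProduct.rightHom : CountGroup W →* W) n (single a) (single b)

variable {a b : W}

open Classical in
/-- A letter `s` preceded by the prefix `w` crosses the wall of the reflection `w * s * w⁻¹`; in the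
word `abab⋯`, whose letters are involutions, this reflection is a palindrome `ababa⋯a`. -/
theorem count_altProd_single (ha : a * a = 1) (hb : b * b = 1) (n : ℕ) (t : W) :
    (altProd n (single a) (single b)).count t =
      ∑ k ∈ Finset.range n, if t = altProd (2 * k + 1) a b then 1 else 0 := by
  induction n generalizing a b t with
  | zero => simp [altProd, count_one]
  | succ n ih =>
    have ha' : a⁻¹ = a := inv_eq_of_mul_eq_one_left ha
    have hconj (k : ℕ) :
        a⁻¹ * t * a = altProd (2 * k + 1) b a ↔ t = altProd (2 * (k + 1) + 1) a b := by
      rw [altProd_two_mul_succ_add_one_eq_conj, mul_assoc, inv_mul_eq_iff_eq_mul,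
        ← eq_mul_inv_iff_mul_eq, ha']
    have hone : altProd (2 * 0 + 1) a b = a := mul_one a
    rw [altProd_succ, count_mul, count_single, right_single, ih hb ha, Finset.sum_range_succ',
      add_comm, hone]
    simp only [hconj]

theorem altProd_single_comm (ha : a * a = 1) (hb : b * b = 1) {m : ℕ} (h : (a * b) ^ m = 1) :
    altProd m (single a) (single b) = altProd m (single b) (single a) := by
  classical
  refine ext_count (fun t => ?_) ?_
  · rw [count_altProd_single ha hb, count_altProd_single hb ha, ← Finset.sum_range_reflect]
    refine Finset.sum_congr rfl fun k hk => ?_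
    rw [altProd_eq_altProd_swap_of_add_eq ha hb h (q := 2 * k + 1)]
    have := Finset.mem_range.1 hk
    omega
  · rw [right_altProd_single, right_altProd_single]
    exact altProd_eq_altProd_swap_of_add_eq ha hb h (two_mul m).symm

theorem right_single_mul_single_pow (a b : W) (m : ℕ) :
    ((single a * single b) ^ m).right = (a * b) ^ m := by
  rw [← altProd_two_mul, right_altProd_single, altProd_two_mul]

theorem count_single_mul_single_pow_pos (ha : a * a = 1) (hb : b * b = 1) {m k : ℕ}
    (hk : k < 2 * m) : 0 < ((single a * single b) ^ m).count (altProd (2 * k + 1) a b) := by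
  classical
  rw [← altProd_two_mul, count_altProd_single ha hb]
  refine Finset.sum_pos' (fun i _ => ?_) ⟨k, Finset.mem_range.2 hk, by simp⟩
  split_ifs <;> simp

theorem count_single_mul_single_pow_eq_zero {t : W} (ha : a * a = 1) (hb : b * b = 1)
    (ht : ∀ n, t ≠ altProd n a b) (m : ℕ) : ((single a * single b) ^ m).count t = 0 := by
  classical
  rw [← altProd_two_mul, count_altProd_single ha hb]
  exact Finset.sum_eq_zero fun k _ => if_neg (ht _)

end CountGroup

end CrossingCounts

section TitsRepresentation

open Module Real

theorem reflection_mul_reflection_pow_eq_one_of_sin_ne_zero {M : Type*} [AddCommGroup M]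
    [Module ℝ M] {x y : M} {f g : Dual ℝ M} (hf : f x = 2) (hg : g y = 2) {m : ℕ} {n : ℤ} {φ : ℝ}
    (hfg : f y * g x = 2 + 2 * cos φ) (hφ : sin φ ≠ 0) (hmφ : m * φ = n * (2 * π)) :
    (reflection hf * reflection hg) ^ m = 1 := by
  have hS (k : ℤ) := Polynomial.Chebyshev.S_two_mul_real_cos φ k
  ext z
  rw [reflection_mul_reflection_pow_apply hf hg m z (2 * cos φ) (by linarith)]
  rcases Nat.even_or_odd' m with ⟨k, rfl | rfl⟩
  · have hzero : (Polynomial.Chebyshev.S ℝ ((k : ℤ) - 1)).eval (2 * cos φ) = 0 := by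
      refine (mul_eq_zero.1 ?_).resolve_right hφ
      have hk : (((k : ℤ) - 1 : ℤ) + 1 : ℝ) * φ = n * π := by push_cast at hmφ ⊢; linarith
      rw [hS, hk, sin_int_mul_pi]
    rw [show (((2 * k : ℕ) : ℤ) - 2) / 2 = k - 1 by omega,
      show (((2 * k : ℕ) : ℤ) - 1) / 2 = k - 1 by omega, hzero]
    simp
  · have hzero : (Polynomial.Chebyshev.S ℝ (k : ℤ)).eval (2 * cos φ) +
        (Polynomial.Chebyshev.S ℝ ((k : ℤ) - 1)).eval (2 * cos φ) = 0 := by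
      refine (mul_eq_zero.1 ?_).resolve_right hφ
      have hk : ((k : ℤ) + 1 : ℝ) * φ = n * (2 * π) - (((k : ℤ) - 1 : ℤ) + 1 : ℝ) * φ := by
        push_cast at hmφ ⊢; linarith
      rw [add_mul, hS, hS, hk, sin_int_mul_two_pi_sub, neg_add_cancel]
    rw [show (((2 * k + 1 : ℕ) : ℤ) - 2) / 2 = k - 1 by omega,
      show (((2 * k + 1 : ℕ) : ℤ) - 1) / 2 = k by omega,
      show (((2 * k + 1 : ℕ) : ℤ) - 3) / 2 = k - 1 by omega,
      show ((2 * k + 1 : ℕ) : ℤ) / 2 = k by omega, hzero]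
    simp

theorem reflection_mul_reflection_sq_eq_one {R M : Type*} [CommRing R] [AddCommGroup M]
    [Module R M] {x y : M} {f g : Dual R M} (hf : f x = 2) (hg : g y = 2) (hfy : f y = 0)
    (hgx : g x = 0) : (reflection hf * reflection hg) ^ 2 = 1 := by
  ext z
  simp only [pow_two, LinearEquiv.mul_apply, reflection_apply, map_sub, map_smul, hf, hg, hfy, hgx,
    LinearEquiv.coe_one, id_eq]
  module

theorem reflection_mul_reflection_pow_eq_one {M : Type*} [AddCommGroup M] [Module ℝ M]
    {x y : M} {f g : Dual ℝ M} (hf : f x = 2) (hg : g y = 2) {m : ℕ} (hm : 2 ≤ m)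
    (hfy : f y = -2 * cos (π / m)) (hgx : g x = -2 * cos (π / m)) :
    (reflection hf * reflection hg) ^ m = 1 := by
  rcases hm.eq_or_lt with rfl | hm
  · apply reflection_mul_reflection_sq_eq_one <;> simp [hfy, hgx]
  have hm0 : (0 : ℝ) < m := by positivity
  have hm2 : (2 : ℝ) < m := by exact_mod_cast hm
  refine reflection_mul_reflection_pow_eq_one_of_sin_ne_zero hf hg (n := 1) (φ := 2 * (π / m))
    ?_ ?_ ?_
  · rw [hfy, hgx, cos_two_mul]; ring
  · refine (sin_pos_of_pos_of_lt_pi (by positivity) ?_).ne'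
    rw [← mul_div_assoc, div_lt_iff₀ hm0, mul_comm]
    exact mul_lt_mul_of_pos_left hm2 pi_pos
  · field_simp; norm_num

namespace LabeledGraph

variable {V : Type*} (Γ : LabeledGraph V)

open Classical in
/-- The Cartan matrix of the Tits representation. Pairs of vertices not joined by an edge get the
coefficient `0`; since no relation is imposed on them, any coefficient would do. -/
noncomputable def cartanCoeff (a b : V) : ℝ :=
  if a = b then 2 else if Γ.graph.Adj a b then -2 * cos (π / Γ.label a b) else 0

theorem cartanCoeff_self (a : V) : Γ.cartanCoeff a a = 2 := if_pos rfl

/-- The coroot of a vertex in the Tits representation; the root is the basis vector. -/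
noncomputable def coroot (a : V) : Dual ℝ (V →₀ ℝ) :=
  Finsupp.linearCombination ℝ (Γ.cartanCoeff a)

theorem coroot_single (a b : V) : Γ.coroot a (Finsupp.single b 1) = Γ.cartanCoeff a b := by
  simp [coroot]

theorem coroot_single_self (a : V) : Γ.coroot a (Finsupp.single a 1) = 2 := by
  rw [coroot_single, cartanCoeff_self]

/-- The reflection of `V →₀ ℝ` attached to a vertex by the Tits representation. -/
noncomputable def refl (a : V) : (V →₀ ℝ) ≃ₗ[ℝ] (V →₀ ℝ) :=
  reflection (Γ.coroot_single_self a)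

theorem refl_apply (a : V) (z : V →₀ ℝ) :
    Γ.refl a z = z - Γ.coroot a z • Finsupp.single a 1 := rfl

theorem refl_mul_self (a : V) : Γ.refl a * Γ.refl a = 1 :=
  LinearEquiv.ext fun z => involutive_reflection (Γ.coroot_single_self a) z

variable {Γ} {a b c : V}

theorem cartanCoeff_of_adj (h : Γ.graph.Adj a b) :
    Γ.cartanCoeff a b = -2 * cos (π / Γ.label a b) := by
  rw [cartanCoeff, if_neg h.ne, if_pos h]

theorem refl_mul_refl_pow_label (h : Γ.graph.Adj a b) :
    (Γ.refl a * Γ.refl b) ^ Γ.label a b = 1 := by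
  refine reflection_mul_reflection_pow_eq_one _ _ (Γ.two_le_label h) ?_ ?_
  · rw [coroot_single, cartanCoeff_of_adj h]
  · rw [coroot_single, cartanCoeff_of_adj h.symm, label_symm]

theorem refl_apply_of_ne (h : a ≠ b) (z : V →₀ ℝ) : Γ.refl a z b = z b := by
  simp [refl_apply, h]

theorem altProd_refl_apply_of_ne (ha : a ≠ b) (hc : c ≠ b) (n : ℕ) (z : V →₀ ℝ) :
    altProd n (Γ.refl a) (Γ.refl c) z b = z b := by
  induction n generalizing a c with
  | zero => simp [altProd]
  | succ n ih => rw [altProd_succ, LinearEquiv.mul_apply, refl_apply_of_ne ha, ih hc ha]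

theorem refl_ne_altProd_refl (ha : a ≠ b) (hc : c ≠ b) (n : ℕ) :
    Γ.refl b ≠ altProd n (Γ.refl a) (Γ.refl c) := by
  intro h
  have := altProd_refl_apply_of_ne (Γ := Γ) ha hc n (Finsupp.single b 1)
  rw [← h, refl_apply, coroot_single_self] at this
  norm_num at this

theorem refl_ne_refl (h : a ≠ b) : Γ.refl b ≠ Γ.refl a := by
  simpa [altProd] using refl_ne_altProd_refl (Γ := Γ) h h 1

theorem cos_pi_div_pos_of_three_le {m : ℕ} (hm : 3 ≤ m) : 0 < cos (π / m) := by
  have hm3 : (3 : ℝ) ≤ m := by exact_mod_cast hm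
  refine cos_pos_of_mem_Ioo ⟨(neg_neg_of_pos (by positivity)).trans (by positivity), ?_⟩
  exact div_lt_div_of_pos_left pi_pos two_pos (by linarith)

theorem refl_mul_refl_mul_refl_ne (h : Γ.graph.Adj a b) (hm : 3 ≤ Γ.label a b) :
    Γ.refl a * Γ.refl b * Γ.refl a ≠ Γ.refl b := by
  intro heq
  have hcomm : Γ.refl a * Γ.refl b = Γ.refl b * Γ.refl a := by
    conv_rhs => rw [← heq]
    rw [mul_assoc (Γ.refl a * Γ.refl b), refl_mul_self, mul_one]
  have := DFunLike.congr_fun (DFunLike.congr_fun hcomm (Finsupp.single b 1)) a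
  simp only [LinearEquiv.mul_apply, refl_apply, coroot_single, cartanCoeff_self, map_sub, map_smul,
    cartanCoeff_of_adj h, Finsupp.sub_apply, Finsupp.smul_apply, Finsupp.single_eq_same,
    Finsupp.single_eq_of_ne h.ne, smul_eq_mul] at this
  linarith [cos_pi_div_pos_of_three_le hm]

end LabeledGraph

end TitsRepresentation

section CoarseGeometry

theorem IsQIEmbedding.mono {X Y : Type*} {L L' A A' : ℝ} {dX : X → X → ℝ} {dY : Y → Y → ℝ}
    {q : X → Y} (h : IsQIEmbedding L A dX dY q) (hX : ∀ x y, 0 ≤ dX x y) (hL : 0 < L)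
    (hLL' : L ≤ L') (hAA' : A ≤ A') : IsQIEmbedding L' A' dX dY q := fun x y => by
  have hdiv : dX x y / L' ≤ dX x y / L := div_le_div_of_nonneg_left (hX x y) hL hLL'
  have hmul : L * dX x y ≤ L' * dX x y := mul_le_mul_of_nonneg_right hLL' (hX x y)
  exact ⟨by linarith [(h x y).1], by linarith [(h x y).2]⟩

theorem IsQIEmbedding.comp {X Y Z : Type*} {L L' A A' : ℝ} {dX : X → X → ℝ} {dY : Y → Y → ℝ}
    {dZ : Z → Z → ℝ} {p : Y → Z} {q : X → Y} (hp : IsQIEmbedding L' A' dY dZ p)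
    (hq : IsQIEmbedding L A dX dY q) (hL' : 1 ≤ L') (hA : 0 ≤ A) :
    IsQIEmbedding (L' * L) (L' * A + A') dX dZ (p ∘ q) := fun x y => by
  have : 0 < L' := one_pos.trans_le hL'
  obtain ⟨hq₁, hq₂⟩ := hq x y
  obtain ⟨hp₁, hp₂⟩ := hp (q x) (q y)
  constructor
  · have hdiv : (dX x y / L - A) / L' ≤ dY (q x) (q y) / L' := by gcongr
    have hA' : A / L' ≤ L' * A :=
      (div_le_self hA hL').trans (le_mul_of_one_le_left hA hL')
    rw [sub_div, div_div, mul_comm L] at hdiv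
    exact (by linarith : _ ≤ dY (q x) (q y) / L' - A').trans hp₁
  · have hmul : L' * dY (q x) (q y) ≤ L' * (L * dX x y + A) := by gcongr
    exact hp₂.trans (by linarith)

variable {X : Type*} {d : X → X → ℝ} {D D' : ℝ} {B C C' : Set X}

theorem HausdorffClose.mono (h : HausdorffClose d D B C) (hD : D ≤ D') :
    HausdorffClose d D' B C :=
  ⟨fun b hb => (h.1 b hb).imp fun _ hc => ⟨hc.1, hc.2.trans_le hD⟩,
    fun c hc => (h.2 c hc).imp fun _ hb => ⟨hb.1, hb.2.trans_le hD⟩⟩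

theorem HausdorffClose.trans (hd : ∀ x y z, d x z ≤ d x y + d y z)
    (h : HausdorffClose d D B C) (h' : HausdorffClose d D' C C') :
    HausdorffClose d (D + D') B C' := by
  constructor
  · intro x hx
    obtain ⟨y, hy, hxy⟩ := h.1 x hx
    obtain ⟨z, hz, hyz⟩ := h'.1 y hy
    exact ⟨z, hz, (hd x y z).trans_lt (add_lt_add hxy hyz)⟩
  · intro z hz
    obtain ⟨y, hy, hyz⟩ := h'.2 z hz
    obtain ⟨x, hx, hxy⟩ := h.2 y hy
    exact ⟨x, hx, (hd x y z).trans_lt (add_lt_add hxy hyz)⟩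

theorem HausdorffClose.image {e : X → X} (h : HausdorffClose d D B C) (he : IsIsometryOf d e) :
    HausdorffClose d D (e '' B) (e '' C) := by
  constructor
  · rintro _ ⟨x, hx, rfl⟩
    obtain ⟨y, hy, hxy⟩ := h.1 x hx
    exact ⟨e y, ⟨y, hy, rfl⟩, (he x y).trans_lt hxy⟩
  · rintro _ ⟨y, hy, rfl⟩
    obtain ⟨x, hx, hxy⟩ := h.2 y hy
    exact ⟨e x, ⟨x, hx, rfl⟩, (he x y).trans_lt hxy⟩

theorem coarseNbhd_image {e : X ≃ X} (he : IsIsometryOf d e) (r : ℝ) (C : Set X) :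
    coarseNbhd d r (e '' C) = e '' coarseNbhd d r C := by
  ext x
  constructor
  · rintro ⟨_, ⟨y, hy, rfl⟩, hyx⟩
    refine ⟨e.symm x, ⟨y, hy, ?_⟩, e.apply_symm_apply x⟩
    rwa [← he, e.apply_symm_apply]
  · rintro ⟨x, ⟨y, hy, hyx⟩, rfl⟩
    exact ⟨e y, ⟨y, hy, rfl⟩, (he y x).trans_le hyx⟩

end CoarseGeometry

section Quasiflats

variable {ι : Type*} [Fintype ι] {X : Type*} {d : X → X → ℝ} {A A' D : ℝ} {k k' : ℝ → ℝ}
  {C C' Q : Set X} {F F' : Set (Set X)}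

variable (ι) in
/-- An `A`-quasiflat of dimension `card ι`: the image of an `(A, A)`-quasi-isometric embedding of
the Euclidean space `ℝ^ι`. -/
def IsQuasiflat (d : X → X → ℝ) (A : ℝ) (Q : Set X) : Prop :=
  ∃ f : EuclideanSpace ℝ ι → X, IsQIEmbedding A A (fun x y => dist x y) d f ∧ Set.range f = Q

theorem IsQuasiflat.mono (h : IsQuasiflat ι d A Q) (hA : 0 < A) (hAA' : A ≤ A') :
    IsQuasiflat ι d A' Q :=
  h.imp fun _ hf => ⟨hf.1.mono (fun _ _ => dist_nonneg) hA hAA' hAA', hf.2⟩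

theorem IsQuasiflat.image {e : X → X} (h : IsQuasiflat ι d A Q) (he : IsIsometryOf d e) :
    IsQuasiflat ι d A (e '' Q) := by
  obtain ⟨f, hf, rfl⟩ := h
  exact ⟨e ∘ f, fun x y => by simpa only [Function.comp_apply, he (f x) (f y)] using hf x y,
    Set.range_comp e f⟩

variable (ι) in
/-- `C` is a coarse intersection of three `A`-quasiflats: for `r ≥ A`, it is at Hausdorff distance
less than `k r` from the intersection of their `r`-neighbourhoods. -/
def IsQuasiflatIntersection (d : X → X → ℝ) (A : ℝ) (k : ℝ → ℝ) (C : Set X) : Prop :=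
  ∃ Q₁ Q₂ Q₃ : Set X, IsQuasiflat ι d A Q₁ ∧ IsQuasiflat ι d A Q₂ ∧ IsQuasiflat ι d A Q₃ ∧
    ∀ r : ℝ, A ≤ r → HausdorffClose d (k r) C
      (coarseNbhd d r Q₁ ∩ coarseNbhd d r Q₂ ∩ coarseNbhd d r Q₃)

theorem IsQuasiflatIntersection.mono (h : IsQuasiflatIntersection ι d A k C) (hA : 0 < A)
    (hAA' : A ≤ A') (hk : ∀ r, A' ≤ r → k r ≤ k' r) : IsQuasiflatIntersection ι d A' k' C := by
  obtain ⟨Q₁, Q₂, Q₃, h₁, h₂, h₃, h⟩ := h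
  exact ⟨Q₁, Q₂, Q₃, h₁.mono hA hAA', h₂.mono hA hAA', h₃.mono hA hAA',
    fun r hr => (h r (hAA'.trans hr)).mono (hk r hr)⟩

theorem IsQuasiflatIntersection.image {e : X ≃ X} (h : IsQuasiflatIntersection ι d A k C)
    (he : IsIsometryOf d e) : IsQuasiflatIntersection ι d A k (e '' C) := by
  obtain ⟨Q₁, Q₂, Q₃, h₁, h₂, h₃, h⟩ := h
  refine ⟨e '' Q₁, e '' Q₂, e '' Q₃, h₁.image he, h₂.image he, h₃.image he, fun r hr => ?_⟩
  rw [coarseNbhd_image he, coarseNbhd_image he, coarseNbhd_image he,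
    ← Set.image_inter e.injective, ← Set.image_inter e.injective]
  exact (h r hr).image he

theorem IsQuasiflatIntersection.of_hausdorffClose (hd : ∀ x y z, d x z ≤ d x y + d y z)
    (h : IsQuasiflatIntersection ι d A k C) (hC : HausdorffClose d D C' C) :
    IsQuasiflatIntersection ι d A (fun r => D + k r) C' := by
  obtain ⟨Q₁, Q₂, Q₃, h₁, h₂, h₃, h⟩ := h
  exact ⟨Q₁, Q₂, Q₃, h₁, h₂, h₃, fun r hr => hC.trans hd (h r hr)⟩

variable (ι) in
/-- The sets of the family `F` are coarse intersections of three quasiflats, with the same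
constants for all of them. -/
def UniformQuasiflatIntersections (d : X → X → ℝ) (F : Set (Set X)) : Prop :=
  ∃ A : ℝ, 0 < A ∧ ∃ k : ℝ → ℝ, (∀ r : ℝ, 0 < r → 0 < k r) ∧
    ∀ C, C ∈ F → IsQuasiflatIntersection ι d A k C

namespace UniformQuasiflatIntersections

theorem union (h : UniformQuasiflatIntersections ι d F)
    (h' : UniformQuasiflatIntersections ι d F') : UniformQuasiflatIntersections ι d (F ∪ F') := by
  obtain ⟨A, hA, k, hk, hF⟩ := h
  obtain ⟨A', hA', k', hk', hF'⟩ := h'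
  have hpos {r : ℝ} (hr : A + A' ≤ r) : 0 < r := (add_pos hA hA').trans_le hr
  refine ⟨A + A', add_pos hA hA', fun r => k r + k' r,
    fun r hr => add_pos (hk r hr) (hk' r hr), ?_⟩
  rintro C (hC | hC)
  · exact (hF C hC).mono hA (by linarith) fun r hr => by linarith [hk' r (hpos hr)]
  · exact (hF' C hC).mono hA' (by linarith) fun r hr => by linarith [hk r (hpos hr)]

theorem of_finite (hF : F.Finite) (h : ∀ C ∈ F, UniformQuasiflatIntersections ι d {C}) :
    UniformQuasiflatIntersections ι d F := by
  induction F, hF using Set.Finite.induction_on with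
  | empty => exact ⟨1, one_pos, fun _ => 1, fun _ _ => one_pos, by simp⟩
  | @insert C F _ _ ih =>
    rw [Set.insert_eq]
    exact (h C (Set.mem_insert C F)).union (ih fun C' hC' => h C' (Set.mem_insert_of_mem C hC'))

theorem of_isometry_orbit (h : UniformQuasiflatIntersections ι d F)
    (hF' : ∀ C ∈ F', ∃ C₀ ∈ F, ∃ e : X ≃ X, IsIsometryOf d e ∧ e '' C₀ = C) :
    UniformQuasiflatIntersections ι d F' := by
  obtain ⟨A, hA, k, hk, hF⟩ := h
  refine ⟨A, hA, k, hk, fun C hC => ?_⟩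
  obtain ⟨C₀, hC₀, e, he, rfl⟩ := hF' C hC
  exact (hF C₀ hC₀).image he

theorem of_hausdorffClose (hd : ∀ x y z, d x z ≤ d x y + d y z)
    (h : UniformQuasiflatIntersections ι d F) (hD : 0 ≤ D)
    (hF' : ∀ C' ∈ F', ∃ C ∈ F, HausdorffClose d D C' C) :
    UniformQuasiflatIntersections ι d F' := by
  obtain ⟨A, hA, k, hk, hF⟩ := h
  refine ⟨A, hA, fun r => D + k r, fun r hr => add_pos_of_nonneg_of_pos hD (hk r hr),
    fun C' hC' => ?_⟩
  obtain ⟨C, hC, hCC'⟩ := hF' C' hC'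
  exact (hF C hC).of_hausdorffClose hd hCC'

end UniformQuasiflatIntersections

end Quasiflats

section UndistortedLattices

theorem abs_dist_floor_sub_dist_le_one (s t : ℝ) : |dist ⌊s⌋ ⌊t⌋ - dist s t| ≤ 1 := by
  have hfract : |Int.fract t - Int.fract s| ≤ 1 :=
    (abs_sub_lt_of_nonneg_of_lt (Int.fract_nonneg t) (Int.fract_lt_one t) (Int.fract_nonneg s)
      (Int.fract_lt_one s)).le
  refine (abs_abs_sub_abs_le _ _).trans ?_
  rwa [show (⌊s⌋ : ℝ) - ⌊t⌋ - (s - t) = Int.fract t - Int.fract s by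
    rw [← Int.self_sub_floor, ← Int.self_sub_floor]; ring]

variable {ι : Type*} [Fintype ι]

theorem exists_isQIEmbedding_floor : ∃ L : ℝ, 1 ≤ L ∧
    IsQIEmbedding L L (fun p q : EuclideanSpace ℝ ι => dist p q) (fun v w : ι → ℤ => dist v w)
      (fun p i => ⌊p i⌋) := by
  obtain ⟨c, hc⟩ : ∃ c, AntilipschitzWith c (WithLp.ofLp : EuclideanSpace ℝ ι → ι → ℝ) :=
    ⟨_, PiLp.antilipschitzWith_ofLp 2 _⟩
  have : (0 : ℝ) ≤ c := c.coe_nonneg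
  refine ⟨c + 1, by linarith, fun p q => ?_⟩
  set D := dist (fun i => ⌊p i⌋) (fun i => ⌊q i⌋)
  have hD : 0 ≤ D := dist_nonneg
  have hfloor (i : ι) := abs_le.1 (abs_dist_floor_sub_dist_le_one (p i) (q i))
  have hlower : dist (WithLp.ofLp p) (WithLp.ofLp q) ≤ D + 1 :=
    (dist_pi_le_iff (by positivity)).2 fun i => by
      linarith [(hfloor i).1, dist_le_pi_dist (fun i => ⌊p i⌋) (fun i => ⌊q i⌋) i]
  have hupper : D ≤ dist p q + 1 :=
    (dist_pi_le_iff (by positivity)).2 fun i => by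
      linarith [(hfloor i).2, PiLp.dist_apply_le p q i]
  constructor
  · rw [sub_le_iff_le_add, div_le_iff₀ (by linarith)]
    calc dist p q ≤ c * dist (WithLp.ofLp p) (WithLp.ofLp q) := hc.le_mul_dist p q
      _ ≤ c * (D + 1) := by gcongr
      _ ≤ (D + (c + 1)) * (c + 1) := by nlinarith
  · nlinarith [dist_nonneg (x := p) (y := q)]

variable {G : Type*} [Group G] {S : Set G}

theorem wordLength_map_le_norm_mul_sum [DecidableEq ι] (hS : Subgroup.closure S = ⊤)
    (φ : Multiplicative (ι → ℤ) →* G) (v : ι → ℤ) :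
    (wordLength S (φ (.ofAdd v)) : ℝ) ≤
      ‖v‖ * ∑ i, (wordLength S (φ (.ofAdd (Pi.single i 1))) : ℝ) := by
  have hsub : wordLength S (φ (.ofAdd (∑ i, Pi.single i (v i)))) ≤
      ∑ i, wordLength S (φ (.ofAdd (Pi.single i (v i)))) :=
    Finset.le_sum_of_subadditive (fun w => wordLength S (φ (.ofAdd w)))
      (by simp [wordLength_one])
      (fun v w => by rw [ofAdd_add, map_mul]; exact wordLength_mul_le hS _ _) _ _
  rw [Finset.univ_sum_single] at hsub
  refine (Nat.cast_le.2 hsub).trans ?_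
  rw [Nat.cast_sum, Finset.mul_sum]
  refine Finset.sum_le_sum fun i _ => ?_
  have hpow : φ (.ofAdd (Pi.single i (v i))) = φ (.ofAdd (Pi.single i 1)) ^ v i := by
    rw [← map_zpow, ← ofAdd_zsmul, ← Pi.single_smul, smul_eq_mul, mul_one]
  have hi : ((v i).natAbs : ℝ) ≤ ‖v‖ := by
    rw [Nat.cast_natAbs, Int.cast_abs, ← Int.norm_eq_abs]
    exact norm_le_pi_norm v i
  rw [hpow]
  calc (wordLength S (φ (.ofAdd (Pi.single i 1)) ^ v i) : ℝ)
      ≤ (v i).natAbs * wordLength S (φ (.ofAdd (Pi.single i 1))) := by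
        exact_mod_cast wordLength_zpow_le hS _ _
    _ ≤ ‖v‖ * wordLength S (φ (.ofAdd (Pi.single i 1))) := by gcongr

theorem exists_isQIEmbedding_of_norm_le_mul_wordLength (hS : Subgroup.closure S = ⊤)
    (φ : Multiplicative (ι → ℤ) →* G) {K : ℝ} (hK : 0 ≤ K)
    (hφ : ∀ v, ‖v‖ ≤ K * wordLength S (φ (.ofAdd v))) :
    ∃ L : ℝ, 1 ≤ L ∧
      IsQIEmbedding L 0 (fun v w => dist v w) (wordDist S) (fun v => φ (.ofAdd v)) := by
  classical
  set T : ℝ := ∑ i, (wordLength S (φ (.ofAdd (Pi.single i 1))) : ℝ)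
  have hT : 0 ≤ T := by positivity
  refine ⟨K + T + 1, by linarith, fun v w => ?_⟩
  have hdist : wordDist S (φ (.ofAdd v)) (φ (.ofAdd w)) = wordLength S (φ (.ofAdd (w - v))) := by
    rw [wordDist, ← map_inv, ← map_mul, ← ofAdd_neg, ← ofAdd_add, neg_add_eq_sub]
  beta_reduce
  rw [hdist, dist_comm, dist_eq_norm, sub_zero, add_zero, div_le_iff₀ (by linarith)]
  constructor
  · exact (hφ (w - v)).trans (by rw [mul_comm]; gcongr; linarith)
  · refine (wordLength_map_le_norm_mul_sum hS φ (w - v)).trans ?_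
    rw [mul_comm]
    gcongr
    linarith

theorem exists_isQuasiflat_range (hS : Subgroup.closure S = ⊤)
    (φ : Multiplicative (ι → ℤ) →* G) {K : ℝ} (hK : 0 ≤ K)
    (hφ : ∀ v, ‖v‖ ≤ K * wordLength S (φ (.ofAdd v))) :
    ∃ A : ℝ, 0 < A ∧ IsQuasiflat ι (wordDist S) A φ.range := by
  obtain ⟨L, hL, hfloor⟩ := exists_isQIEmbedding_floor (ι := ι)
  obtain ⟨L', hL', hφL⟩ := exists_isQIEmbedding_of_norm_le_mul_wordLength hS φ hK hφ
  have hpos : 0 < L' * L := by positivity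
  have hcomp := hφL.comp hfloor hL' (zero_le_one.trans hL)
  rw [add_zero] at hcomp
  have hsurj : Function.Surjective fun (p : EuclideanSpace ℝ ι) i => ⌊p i⌋ :=
    fun v => ⟨WithLp.toLp 2 fun i => (v i : ℝ), by simp⟩
  exact ⟨L' * L, hpos, _, hcomp, hsurj.range_comp _⟩

/-- The homomorphism `ℤ² → G` defined by two commuting elements. -/
def zpowMulZpowHom {x z : G} (h : Commute x z) : Multiplicative (Fin 2 → ℤ) →* G :=
  MonoidHom.mk' (fun v => x ^ v.toAdd 0 * z ^ v.toAdd 1) fun v w => by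
    rw [toAdd_mul, Pi.add_apply, Pi.add_apply, zpow_add, zpow_add,
      ((h.zpow_zpow _ _).symm).mul_mul_mul_comm]

theorem zpowMulZpowHom_apply {x z : G} (h : Commute x z) (v : Multiplicative (Fin 2 → ℤ)) :
    zpowMulZpowHom h v = x ^ v.toAdd 0 * z ^ v.toAdd 1 := rfl

theorem range_zpowMulZpowHom {x z : G} (h : Commute x z) :
    (zpowMulZpowHom h).range = Subgroup.zpowers x ⊔ Subgroup.zpowers z := by
  refine le_antisymm ?_ (sup_le ?_ ?_)
  · rintro _ ⟨v, rfl⟩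
    exact Subgroup.mul_mem_sup (Subgroup.zpow_mem_zpowers x _) (Subgroup.zpow_mem_zpowers z _)
  · rw [Subgroup.zpowers_le]
    exact ⟨.ofAdd ![1, 0], by simp [zpowMulZpowHom_apply]⟩
  · rw [Subgroup.zpowers_le]
    exact ⟨.ofAdd ![0, 1], by simp [zpowMulZpowHom_apply]⟩

theorem mem_zpowers_sup_zpowers_iff {x z g : G} (h : Commute x z) :
    g ∈ Subgroup.zpowers x ⊔ Subgroup.zpowers z ↔ ∃ i j : ℤ, x ^ i * z ^ j = g := by
  rw [← range_zpowMulZpowHom h]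
  constructor
  · rintro ⟨v, rfl⟩
    exact ⟨_, _, rfl⟩
  · rintro ⟨i, j, rfl⟩
    exact ⟨.ofAdd ![i, j], rfl⟩

theorem exists_isQuasiflat_zpowers_sup_zpowers (hS : Subgroup.closure S = ⊤) {x z : G}
    (h : Commute x z) {K : ℝ} (hK : 0 ≤ K)
    (hi : ∀ i j : ℤ, |(i : ℝ)| ≤ K * wordLength S (x ^ i * z ^ j))
    (hj : ∀ i j : ℤ, |(j : ℝ)| ≤ K * wordLength S (x ^ i * z ^ j)) :
    ∃ A : ℝ, 0 < A ∧ IsQuasiflat (Fin 2) (wordDist S) A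
      (Subgroup.zpowers x ⊔ Subgroup.zpowers z : Subgroup G) := by
  rw [← range_zpowMulZpowHom h]
  refine exists_isQuasiflat_range hS (zpowMulZpowHom h) hK fun v => ?_
  rw [pi_norm_le_iff_of_nonneg (by positivity), Fin.forall_fin_two]
  exact ⟨hi _ _, hj _ _⟩

end UndistortedLattices

section Subgroups

variable {ι : Type*} [Fintype ι] {G : Type*} [Group G] {S : Set G}

theorem isIsometryOf_mulLeft (g : G) : IsIsometryOf (wordDist S) (Equiv.mulLeft g) :=
  wordDist_mul_left g

theorem exists_wordDist_le_of_mul_inv_mem (H K : Subgroup G) (u v : G) :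
    ∃ D : ℕ, ∀ g, g * u⁻¹ ∈ H → g * v⁻¹ ∈ K → ∃ x ∈ H ⊓ K, wordDist S x g ≤ D := by
  by_cases hne : ∃ g₀, g₀ * u⁻¹ ∈ H ∧ g₀ * v⁻¹ ∈ K
  · obtain ⟨g₀, hu₀, hv₀⟩ := hne
    refine ⟨wordLength S g₀, fun g hu hv => ⟨g * g₀⁻¹, ⟨?_, ?_⟩, ?_⟩⟩
    · simpa [mul_assoc] using H.mul_mem hu (H.inv_mem hu₀)
    · simpa [mul_assoc] using K.mul_mem hv (K.inv_mem hv₀)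
    · simp [wordDist]
  · exact ⟨0, fun g hu hv => (hne ⟨g, hu, hv⟩).elim⟩

theorem exists_wordDist_le_of_mem_coarseNbhd (hS : Subgroup.closure S = ⊤) (hfin : S.Finite)
    (H K : Subgroup G) (r : ℝ) :
    ∃ D : ℕ, ∀ g ∈ coarseNbhd (wordDist S) r (H : Set G) ∩ coarseNbhd (wordDist S) r (K : Set G),
      ∃ x ∈ H ⊓ K, wordDist S x g ≤ D := by
  choose D hD using exists_wordDist_le_of_mul_inv_mem (S := S) H K
  have hball : {g | (wordLength S g : ℝ) ≤ r}.Finite :=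
    (finite_wordLength_le hS hfin ⌊r⌋₊).subset fun g hg => Nat.le_floor hg
  obtain ⟨N, hN⟩ := ((hball.prod hball).image fun p => D p.1 p.2).bddAbove
  refine ⟨N, ?_⟩
  rintro g ⟨⟨h, hh, hhg⟩, ⟨k, hk, hkg⟩⟩
  obtain ⟨x, hx, hxg⟩ := hD (h⁻¹ * g) (k⁻¹ * g) g (by simpa using hh) (by simpa using hk)
  have hDN : D (h⁻¹ * g) (k⁻¹ * g) ≤ N := hN ⟨(h⁻¹ * g, k⁻¹ * g), ⟨hhg, hkg⟩, rfl⟩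
  exact ⟨x, hx, hxg.trans (by exact_mod_cast hDN)⟩

theorem exists_hausdorffClose_inf_coarseNbhd (hS : Subgroup.closure S = ⊤) (hfin : S.Finite)
    (H K : Subgroup G) (r : ℝ) :
    ∃ D : ℝ, 0 < D ∧ (0 ≤ r → HausdorffClose (wordDist S) D (H ⊓ K : Subgroup G)
      (coarseNbhd (wordDist S) r H ∩ coarseNbhd (wordDist S) r K)) := by
  obtain ⟨D, hD⟩ := exists_wordDist_le_of_mem_coarseNbhd hS hfin H K r
  refine ⟨D + 1, by positivity, fun hr => ⟨fun x hx => ?_, fun g hg => ?_⟩⟩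
  · have hxx : wordDist S x x = 0 := wordDist_self x
    exact ⟨x, ⟨⟨x, hx.1, hxx.trans_le hr⟩, ⟨x, hx.2, hxx.trans_le hr⟩⟩,
      hxx.trans_lt (by positivity)⟩
  · exact (hD g hg).imp fun x hx => ⟨hx.1, hx.2.trans_lt (lt_add_one _)⟩

theorem uniformQuasiflatIntersections_inf (hS : Subgroup.closure S = ⊤) (hfin : S.Finite)
    {H K : Subgroup G} (hH : ∃ A : ℝ, 0 < A ∧ IsQuasiflat ι (wordDist S) A H)
    (hK : ∃ A : ℝ, 0 < A ∧ IsQuasiflat ι (wordDist S) A K) :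
    UniformQuasiflatIntersections ι (wordDist S) {((H ⊓ K : Subgroup G) : Set G)} := by
  obtain ⟨A, hA, hH⟩ := hH
  obtain ⟨A', hA', hK⟩ := hK
  choose k hk hclose using exists_hausdorffClose_inf_coarseNbhd hS hfin H K
  have hpos : 0 < max A A' := lt_max_of_lt_left hA
  have hK' := hK.mono hA' (le_max_right A A')
  refine ⟨max A A', hpos, k, fun r _ => hk r, ?_⟩
  rintro _ rfl
  refine ⟨H, K, K, hH.mono hA (le_max_left A A'), hK', hK', fun r hr => ?_⟩
  rw [Set.inter_assoc, Set.inter_self]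
  exact hclose r (hpos.le.trans hr)

theorem hausdorffClose_zpowers_pow (hS : Subgroup.closure S = ⊤) (x : G) {n : ℕ} (hn : n ≠ 0) :
    HausdorffClose (wordDist S) (n * wordLength S x + 1) (Subgroup.zpowers x)
      (Subgroup.zpowers (x ^ n)) := by
  have hpow (q : ℤ) : (x ^ n) ^ q = x ^ (n * q) := by rw [zpow_mul, zpow_natCast]
  constructor
  · rintro _ ⟨i, rfl⟩
    refine ⟨(x ^ n) ^ (i / n), ⟨_, rfl⟩, ?_⟩
    have hrem : (x ^ i)⁻¹ * (x ^ n) ^ (i / n) = (x ^ (i % n))⁻¹ := by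
      rw [hpow, ← zpow_neg, ← zpow_neg, ← zpow_add, Int.emod_def]; congr 1; ring
    have hle : (i % n).natAbs ≤ n := by
      have := Int.emod_nonneg i (Nat.cast_ne_zero.2 hn)
      have := Int.emod_lt_of_pos i (Nat.cast_pos.2 (Nat.pos_of_ne_zero hn))
      omega
    rw [wordDist, hrem, wordLength_inv hS]
    have := (wordLength_zpow_le hS x (i % n)).trans (Nat.mul_le_mul_right _ hle)
    exact_mod_cast Nat.lt_succ_of_le this
  · rintro _ ⟨q, rfl⟩
    exact ⟨(x ^ n) ^ q, ⟨n * q, (hpow q).symm⟩, (wordDist_self _).trans_lt (by positivity)⟩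

theorem hausdorffClose_zpowers_of_semiconjBy {x y g : G} (h : SemiconjBy g x y) :
    HausdorffClose (wordDist S) (wordLength S g + 1) (Subgroup.zpowers y)
      (Equiv.mulLeft g '' (Subgroup.zpowers x : Set G)) := by
  have hdist (n : ℤ) : wordDist S (y ^ n) (g * x ^ n) < wordLength S g + 1 := by
    rw [(h.zpow_right n).eq, wordDist, inv_mul_cancel_left]
    exact lt_add_one _
  constructor
  · rintro _ ⟨n, rfl⟩
    exact ⟨_, ⟨_, ⟨n, rfl⟩, rfl⟩, hdist n⟩
  · rintro _ ⟨_, ⟨n, rfl⟩, rfl⟩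
    exact ⟨_, ⟨n, rfl⟩, hdist n⟩

theorem uniformQuasiflatIntersections_zpowers_of_pow (hS : Subgroup.closure S = ⊤) {x : G} {n : ℕ}
    (hn : n ≠ 0)
    (h : UniformQuasiflatIntersections ι (wordDist S) {(Subgroup.zpowers (x ^ n) : Set G)}) :
    UniformQuasiflatIntersections ι (wordDist S) {(Subgroup.zpowers x : Set G)} := by
  refine h.of_hausdorffClose (D := n * wordLength S x + 1) (wordDist_triangle hS) (by positivity) ?_
  rintro _ rfl
  exact ⟨_, rfl, hausdorffClose_zpowers_pow hS x hn⟩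

theorem uniformQuasiflatIntersections_zpowers_of_semiconjBy (hS : Subgroup.closure S = ⊤)
    {x y g : G} (hg : SemiconjBy g x y)
    (h : UniformQuasiflatIntersections ι (wordDist S) {(Subgroup.zpowers x : Set G)}) :
    UniformQuasiflatIntersections ι (wordDist S) {(Subgroup.zpowers y : Set G)} := by
  have hg' : UniformQuasiflatIntersections ι (wordDist S)
      {Equiv.mulLeft g '' (Subgroup.zpowers x : Set G)} := by
    refine h.of_isometry_orbit ?_
    rintro _ rfl
    exact ⟨_, rfl, _, isIsometryOf_mulLeft g, rfl⟩
  refine hg'.of_hausdorffClose (D := wordLength S g + 1) (wordDist_triangle hS) (by positivity) ?_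
  rintro _ rfl
  exact ⟨_, rfl, hausdorffClose_zpowers_of_semiconjBy hg⟩

end Subgroups

section ArtinGroups

open CountGroup

variable {V : Type*} (Γ : LabeledGraph V)

theorem closure_range_artinGen : Subgroup.closure (Set.range (artinGen Γ)) = ⊤ :=
  PresentedGroup.closure_range_of _

theorem altProd_artinGen_comm {a b : V} (h : Γ.graph.Adj a b) :
    altProd (Γ.label a b) (artinGen Γ a) (artinGen Γ b) =
      altProd (Γ.label a b) (artinGen Γ b) (artinGen Γ a) := by
  have hrel : altProd (Γ.label a b) (FreeGroup.of a) (FreeGroup.of b) *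
      (altProd (Γ.label a b) (FreeGroup.of b) (FreeGroup.of a))⁻¹ ∈ Γ.artinRels := ⟨a, b, h, rfl⟩
  have := PresentedGroup.one_of_mem hrel
  rwa [map_mul, map_inv, mul_inv_eq_one, map_altProd, map_altProd] at this

/-- The element `(ab) ^ m` of the Artin group, for an edge `{a, b}` of label `m`. It commutes with
`a` and `b`, and is the square of `Δ`. -/
def artinCentral (a b : V) : ArtinGroup Γ :=
  (artinGen Γ a * artinGen Γ b) ^ Γ.label a b

/-- The homomorphism sending each generator to the single crossing of the wall of its reflection
in the Tits representation. -/
noncomputable def artinCountHom : ArtinGroup Γ →* CountGroup ((V →₀ ℝ) ≃ₗ[ℝ] (V →₀ ℝ)) :=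
  PresentedGroup.toGroup (f := fun v => single (Γ.refl v)) <| by
    rintro _ ⟨a, b, h, rfl⟩
    rw [map_mul, map_inv, mul_inv_eq_one, map_altProd, map_altProd, FreeGroup.lift_apply_of,
      FreeGroup.lift_apply_of]
    exact altProd_single_comm (Γ.refl_mul_self a) (Γ.refl_mul_self b)
      (LabeledGraph.refl_mul_refl_pow_label h)

/-- The signed number of times that a word representing `g` crosses the wall labelled by `t`. -/
noncomputable def crossings (g : ArtinGroup Γ) (t : (V →₀ ℝ) ≃ₗ[ℝ] (V →₀ ℝ)) : ℤ :=
  (artinCountHom Γ g).count t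

/-- The subgroup generated by `a` and `Δ²`, where `Δ` is the element of the edge `{a, b}`. -/
def edgeFlat (a b : V) : Subgroup (ArtinGroup Γ) :=
  Subgroup.zpowers (artinGen Γ a) ⊔ Subgroup.zpowers (artinCentral Γ a b)

theorem artinCountHom_artinGen (v : V) : artinCountHom Γ (artinGen Γ v) = single (Γ.refl v) :=
  PresentedGroup.toGroup.of _

theorem artinCountHom_artinCentral (a b : V) :
    artinCountHom Γ (artinCentral Γ a b) =
      (single (Γ.refl a) * single (Γ.refl b)) ^ Γ.label a b := by
  rw [artinCentral, map_pow, map_mul, artinCountHom_artinGen, artinCountHom_artinGen]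

theorem abs_crossings_le_wordLength (g : ArtinGroup Γ) (t : (V →₀ ℝ) ≃ₗ[ℝ] (V →₀ ℝ)) :
    |crossings Γ g t| ≤ wordLength (Set.range (artinGen Γ)) g := by
  refine abs_count_le_wordLength (closure_range_artinGen Γ) (artinCountHom Γ) ?_ g t
  rintro _ ⟨v, rfl⟩ t
  rw [artinCountHom_artinGen, count_single]
  split_ifs <;> simp

variable {Γ} {a b c : V}

theorem artinDelta_pow_two (h : Γ.graph.Adj a b) : artinDelta Γ a b ^ 2 = artinCentral Γ a b :=
  (pow_two _).trans (altProd_mul_altProd_of_comm (altProd_artinGen_comm Γ h))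

theorem artinCentral_comm (h : Γ.graph.Adj a b) : artinCentral Γ a b = artinCentral Γ b a := by
  rw [← artinDelta_pow_two h, ← artinDelta_pow_two h.symm, artinDelta, artinDelta,
    Γ.label_symm b a, altProd_artinGen_comm Γ h]

theorem commute_artinGen_artinCentral (h : Γ.graph.Adj a b) :
    Commute (artinGen Γ a) (artinCentral Γ a b) :=
  commute_mul_pow_of_altProd_comm (altProd_artinGen_comm Γ h)

theorem semiconjBy_artinDelta (h : Γ.graph.Adj a b) (hodd : Odd (Γ.label a b)) :
    SemiconjBy (artinDelta Γ a b) (artinGen Γ b) (artinGen Γ a) :=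
  semiconjBy_altProd_of_odd hodd (altProd_artinGen_comm Γ h)

open Classical in
theorem crossings_artinGen_zpow_mul_artinCentral_zpow (h : Γ.graph.Adj a b) (i j : ℤ)
    (t : (V →₀ ℝ) ≃ₗ[ℝ] (V →₀ ℝ)) :
    crossings Γ (artinGen Γ a ^ i * artinCentral Γ a b ^ j) t =
      (if t = Γ.refl a then i else 0) + j * crossings Γ (artinCentral Γ a b) t := by
  have hright : (artinCountHom Γ (artinCentral Γ a b)).right = 1 := by
    rw [artinCountHom_artinCentral, right_single_mul_single_pow,
      LabeledGraph.refl_mul_refl_pow_label h]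
  have hright_zpow : (artinCountHom Γ (artinCentral Γ a b) ^ j).right = 1 := by
    rw [← SemidirectProduct.rightHom_eq_right, map_zpow, SemidirectProduct.rightHom_eq_right,
      hright, one_zpow]
  rw [((commute_artinGen_artinCentral h).zpow_zpow i j).eq, crossings, map_mul, map_zpow, map_zpow,
    count_mul, hright_zpow, count_zpow (by simp [hright]), artinCountHom_artinGen, inv_one,
    one_mul, mul_one, count_single_zpow, add_comm, crossings]

theorem crossings_artinCentral_pos (h : Γ.graph.Adj a b) :
    0 < crossings Γ (artinCentral Γ a b) (Γ.refl b) := by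
  have hpos := count_single_mul_single_pow_pos (Γ.refl_mul_self b) (Γ.refl_mul_self a)
    (m := Γ.label b a) (k := 0) (by have := Γ.two_le_label h.symm; omega)
  rw [artinCentral_comm h, crossings, artinCountHom_artinCentral]
  simpa [altProd] using hpos

theorem crossings_artinCentral_conj_pos (h : Γ.graph.Adj a b) :
    0 < crossings Γ (artinCentral Γ a b) (Γ.refl a * Γ.refl b * Γ.refl a) := by
  have hpos := count_single_mul_single_pow_pos (Γ.refl_mul_self a) (Γ.refl_mul_self b)
    (m := Γ.label a b) (k := 1) (by have := Γ.two_le_label h; omega)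
  rw [crossings, artinCountHom_artinCentral]
  simpa [altProd, mul_assoc] using hpos

theorem crossings_artinCentral_eq_zero (hb : a ≠ b) (hc : c ≠ b) :
    crossings Γ (artinCentral Γ a c) (Γ.refl b) = 0 := by
  rw [crossings, artinCountHom_artinCentral]
  exact count_single_mul_single_pow_eq_zero (Γ.refl_mul_self a) (Γ.refl_mul_self c)
    (LabeledGraph.refl_ne_altProd_refl hb hc) _

theorem abs_le_wordLength_artinGen_zpow_mul_artinCentral_zpow (h : Γ.graph.Adj a b) (i j : ℤ) :
    |j| ≤ wordLength (Set.range (artinGen Γ)) (artinGen Γ a ^ i * artinCentral Γ a b ^ j) := by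
  refine le_trans ?_ (abs_crossings_le_wordLength Γ _ (Γ.refl b))
  rw [crossings_artinGen_zpow_mul_artinCentral_zpow h, if_neg (LabeledGraph.refl_ne_refl h.ne),
    zero_add, abs_mul]
  exact le_mul_of_one_le_right (abs_nonneg j)
    (Int.one_le_abs (crossings_artinCentral_pos h).ne')

theorem abs_le_mul_wordLength_artinGen_zpow_mul_artinCentral_zpow (h : Γ.graph.Adj a b) (i j : ℤ) :
    |i| ≤ (1 + |crossings Γ (artinCentral Γ a b) (Γ.refl a)|) *
      wordLength (Set.range (artinGen Γ)) (artinGen Γ a ^ i * artinCentral Γ a b ^ j) := by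
  have hi := abs_crossings_le_wordLength Γ (artinGen Γ a ^ i * artinCentral Γ a b ^ j) (Γ.refl a)
  rw [crossings_artinGen_zpow_mul_artinCentral_zpow h, if_pos rfl] at hi
  have hj := abs_le_wordLength_artinGen_zpow_mul_artinCentral_zpow h i j
  set c := crossings Γ (artinCentral Γ a b) (Γ.refl a)
  set n := wordLength (Set.range (artinGen Γ)) (artinGen Γ a ^ i * artinCentral Γ a b ^ j)
  calc |i| = |i + j * c - j * c| := by rw [add_sub_cancel_right]
    _ ≤ |i + j * c| + |j * c| := abs_sub _ _
    _ ≤ n + n * |c| := by rw [abs_mul]; gcongr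
    _ = (1 + |c|) * n := by ring

theorem exists_isQuasiflat_edgeFlat (h : Γ.graph.Adj a b) :
    ∃ A : ℝ, 0 < A ∧ IsQuasiflat (Fin 2) (artinDist Γ) A (edgeFlat Γ a b) := by
  set c := |crossings Γ (artinCentral Γ a b) (Γ.refl a)|
  have hc : 0 ≤ c := abs_nonneg _
  refine exists_isQuasiflat_zpowers_sup_zpowers (closure_range_artinGen Γ)
    (commute_artinGen_artinCentral h) (K := ((1 + c : ℤ) : ℝ)) (by positivity)
    (fun i j => ?_) fun i j => ?_
  · exact_mod_cast abs_le_mul_wordLength_artinGen_zpow_mul_artinCentral_zpow h i j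
  · have hj := (abs_le_wordLength_artinGen_zpow_mul_artinCentral_zpow h i j).trans
      (le_mul_of_one_le_left (Int.natCast_nonneg _) (le_add_of_nonneg_right hc))
    exact_mod_cast hj

theorem edgeFlat_inf_edgeFlat_symm (h : Γ.graph.Adj a b) (hm : 3 ≤ Γ.label a b) :
    edgeFlat Γ a b ⊓ edgeFlat Γ b a = Subgroup.zpowers (artinCentral Γ a b) := by
  refine le_antisymm ?_ (le_inf le_sup_right ((artinCentral_comm h).symm ▸ le_sup_right))
  rintro g ⟨hab, hba⟩
  obtain ⟨i, j, rfl⟩ := (mem_zpowers_sup_zpowers_iff (commute_artinGen_artinCentral h)).1 hab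
  obtain ⟨k, l, hkl⟩ :=
    (mem_zpowers_sup_zpowers_iff (commute_artinGen_artinCentral h.symm)).1 hba
  have hcount (t) := congrArg (crossings Γ · t) hkl
  simp only [crossings_artinGen_zpow_mul_artinCentral_zpow h,
    crossings_artinGen_zpow_mul_artinCentral_zpow h.symm] at hcount
  simp only [← artinCentral_comm h] at hcount
  have hne : Γ.refl a * Γ.refl b * Γ.refl a ≠ Γ.refl a := by
    rw [Ne, mul_eq_right, ← Γ.refl_mul_self a, mul_right_inj]
    exact LabeledGraph.refl_ne_refl h.ne
  have hlj : l = j := by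
    have := hcount (Γ.refl a * Γ.refl b * Γ.refl a)
    rw [if_neg hne, if_neg (LabeledGraph.refl_mul_refl_mul_refl_ne h hm), zero_add,
      zero_add] at this
    exact mul_right_cancel₀ (crossings_artinCentral_conj_pos h).ne' this
  have hi : 0 = i := by
    have := hcount (Γ.refl a)
    rwa [if_pos rfl, if_neg (LabeledGraph.refl_ne_refl h.ne.symm), hlj, add_left_inj] at this
  exact ⟨j, by simp [← hi]⟩

theorem edgeFlat_inf_edgeFlat (hb : Γ.graph.Adj a b) (hc : Γ.graph.Adj a c) (hbc : b ≠ c) :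
    edgeFlat Γ a b ⊓ edgeFlat Γ a c = Subgroup.zpowers (artinGen Γ a) := by
  refine le_antisymm ?_ (le_inf le_sup_left le_sup_left)
  rintro g ⟨hab, hac⟩
  obtain ⟨i, j, rfl⟩ := (mem_zpowers_sup_zpowers_iff (commute_artinGen_artinCentral hb)).1 hab
  obtain ⟨k, l, hkl⟩ := (mem_zpowers_sup_zpowers_iff (commute_artinGen_artinCentral hc)).1 hac
  have hcount := congrArg (crossings Γ · (Γ.refl b)) hkl
  simp only [crossings_artinGen_zpow_mul_artinCentral_zpow hb,
    crossings_artinGen_zpow_mul_artinCentral_zpow hc, if_neg (LabeledGraph.refl_ne_refl hb.ne),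
    crossings_artinCentral_eq_zero hb.ne hbc.symm, mul_zero, zero_add] at hcount
  have hj : j = 0 :=
    (mul_eq_zero.1 hcount.symm).resolve_right (crossings_artinCentral_pos hb).ne'
  exact ⟨i, by simp [hj]⟩

end ArtinGroups

section StableCosets

variable {V : Type*} {Γ : LabeledGraph V} {a b c : V}

theorem LabeledGraph.CLTTF.exists_adj (hΓ : Γ.CLTTF) (a : V) : ∃ b, Γ.graph.Adj a b := by
  have hcard : 1 < Nat.card V := lt_of_lt_of_le (by norm_num) hΓ.2.1
  have : Finite V := Nat.finite_of_card_ne_zero (by omega)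
  have : Nontrivial V := Finite.one_lt_card_iff_nontrivial.1 hcard
  exact hΓ.1.preconnected.exists_adj_of_nontrivial a

variable (Γ) in
/-- The subgroups of which the stable cosets are the left cosets. -/
def stableSubgroups : Set (Subgroup (ArtinGroup Γ)) :=
  {H | (∃ a b, Γ.graph.Adj a b ∧ Subgroup.zpowers (artinDelta Γ a b) = H) ∨
    ∃ a, Γ.StableVertex a ∧ Subgroup.zpowers (artinGen Γ a) = H}

theorem StableCoset.exists_mem_stableSubgroups {C : Set (ArtinGroup Γ)} (hC : StableCoset Γ C) :
    ∃ H ∈ stableSubgroups Γ, ∃ g, C = leftCosetSet g H := by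
  rcases hC with ⟨g, a, b, hab, hC⟩ | ⟨g, a, ha, hC⟩
  exacts [⟨_, Or.inl ⟨a, b, hab, rfl⟩, g, hC⟩, ⟨_, Or.inr ⟨a, ha, rfl⟩, g, hC⟩]

variable [Finite V]

theorem finite_stableSubgroups : (stableSubgroups Γ).Finite := by
  refine ((Set.finite_range fun p : V × V => Subgroup.zpowers (artinDelta Γ p.1 p.2)).union
    (Set.finite_range fun a => Subgroup.zpowers (artinGen Γ a))).subset ?_
  rintro _ (⟨a, b, -, rfl⟩ | ⟨a, -, rfl⟩)
  exacts [Or.inl ⟨(a, b), rfl⟩, Or.inr ⟨a, rfl⟩]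

theorem uniformQuasiflatIntersections_zpowers_artinDelta (h : Γ.graph.Adj a b)
    (hm : 3 ≤ Γ.label a b) :
    UniformQuasiflatIntersections (Fin 2) (artinDist Γ)
      {(Subgroup.zpowers (artinDelta Γ a b) : Set (ArtinGroup Γ))} := by
  have hS := closure_range_artinGen Γ
  refine uniformQuasiflatIntersections_zpowers_of_pow hS two_ne_zero ?_
  rw [artinDelta_pow_two h, ← edgeFlat_inf_edgeFlat_symm h hm]
  exact uniformQuasiflatIntersections_inf hS (Set.finite_range _)
    (exists_isQuasiflat_edgeFlat h) (exists_isQuasiflat_edgeFlat h.symm)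

theorem uniformQuasiflatIntersections_zpowers_artinGen_of_adj (hb : Γ.graph.Adj a b)
    (hc : Γ.graph.Adj a c) (hbc : b ≠ c) :
    UniformQuasiflatIntersections (Fin 2) (artinDist Γ)
      {(Subgroup.zpowers (artinGen Γ a) : Set (ArtinGroup Γ))} := by
  rw [← edgeFlat_inf_edgeFlat hb hc hbc]
  exact uniformQuasiflatIntersections_inf (closure_range_artinGen Γ) (Set.finite_range _)
    (exists_isQuasiflat_edgeFlat hb) (exists_isQuasiflat_edgeFlat hc)

theorem uniformQuasiflatIntersections_zpowers_artinGen_of_not_isLeaf (ha : ¬Γ.IsLeaf a)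
    (hab : Γ.graph.Adj a b) :
    UniformQuasiflatIntersections (Fin 2) (artinDist Γ)
      {(Subgroup.zpowers (artinGen Γ a) : Set (ArtinGroup Γ))} := by
  obtain ⟨c, hac, hcb⟩ : ∃ c, Γ.graph.Adj a c ∧ c ≠ b := by
    by_contra! hunique
    exact ha ⟨b, hab, hunique⟩
  exact uniformQuasiflatIntersections_zpowers_artinGen_of_adj hac hab hcb

theorem LabeledGraph.StableVertex.uniformQuasiflatIntersections_zpowers_artinGen
    (ha : Γ.StableVertex a) (hab : Γ.graph.Adj a b) :
    UniformQuasiflatIntersections (Fin 2) (artinDist Γ)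
      {(Subgroup.zpowers (artinGen Γ a) : Set (ArtinGroup Γ))} := by
  rcases ha with ha | ⟨-, c, hac, hodd, hc⟩
  · exact uniformQuasiflatIntersections_zpowers_artinGen_of_not_isLeaf ha hab
  · exact uniformQuasiflatIntersections_zpowers_of_semiconjBy (closure_range_artinGen Γ)
      (semiconjBy_artinDelta hac hodd)
      (uniformQuasiflatIntersections_zpowers_artinGen_of_not_isLeaf hc hac.symm)

end StableCosets

theorem stable_coset_coarse_intersection_of_quasiflats_general {V : Type*} [Finite V]
    (Γ : LabeledGraph V) (h3 : ∀ ⦃a b⦄, Γ.graph.Adj a b → 3 ≤ Γ.label a b)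
    (hadj : ∀ a, ∃ b, Γ.graph.Adj a b) :
    UniformQuasiflatIntersections (Fin 2) (artinDist Γ) {C | StableCoset Γ C} := by
  have hsubgroups : UniformQuasiflatIntersections (Fin 2) (artinDist Γ)
      ((↑) '' stableSubgroups Γ) := by
    refine .of_finite (finite_stableSubgroups.image _) ?_
    rintro _ ⟨_, ⟨a, b, hab, rfl⟩ | ⟨a, ha, rfl⟩, rfl⟩
    · exact uniformQuasiflatIntersections_zpowers_artinDelta hab (h3 hab)
    · obtain ⟨b, hab⟩ := hadj a
      exact ha.uniformQuasiflatIntersections_zpowers_artinGen hab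
  refine hsubgroups.of_isometry_orbit fun C hC => ?_
  obtain ⟨H, hH, g, rfl⟩ := StableCoset.exists_mem_stableSubgroups hC
  exact ⟨H, ⟨H, hH, rfl⟩, _, isIsometryOf_mulLeft g, rfl⟩

/-- In a CLTTF Artin group, every stable coset is a coarse
intersection of three `2`-dimensional quasiflats, with uniform constants. -/
theorem stable_coset_coarse_intersection_of_quasiflats {V : Type*} [Finite V]
    (Γ : LabeledGraph V) (hΓ : Γ.CLTTF) :
    ∃ A : ℝ, 0 < A ∧ ∃ k : ℝ → ℝ, (∀ r : ℝ, 0 < r → 0 < k r) ∧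
      ∀ C : Set (ArtinGroup Γ), StableCoset Γ C →
        ∃ Q₁ Q₂ Q₃ : Set (ArtinGroup Γ),
          (∃ f₁ : EuclideanSpace ℝ (Fin 2) → ArtinGroup Γ,
            IsQIEmbedding A A (fun x y => dist x y) (artinDist Γ) f₁ ∧
              Set.range f₁ = Q₁) ∧
          (∃ f₂ : EuclideanSpace ℝ (Fin 2) → ArtinGroup Γ,
            IsQIEmbedding A A (fun x y => dist x y) (artinDist Γ) f₂ ∧
              Set.range f₂ = Q₂) ∧
          (∃ f₃ : EuclideanSpace ℝ (Fin 2) → ArtinGroup Γ,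
            IsQIEmbedding A A (fun x y => dist x y) (artinDist Γ) f₃ ∧
              Set.range f₃ = Q₃) ∧
          ∀ r : ℝ, A ≤ r →
            HausdorffClose (artinDist Γ) (k r) C
              (coarseNbhd (artinDist Γ) r Q₁ ∩ coarseNbhd (artinDist Γ) r Q₂ ∩
                coarseNbhd (artinDist Γ) r Q₃) :=
  stable_coset_coarse_intersection_of_quasiflats_general Γ hΓ.2.2.1 hΓ.exists_adj
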